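/- Let L be a free ℤ-module of finite rank and let E be any set of ℤ-linear endomorphisms of L. For m ≥ 1 let a_m denote the number of ℤ-submodules H of L such that L/H has cardinality m and φ(H) ⊆ H for all φ ∈ E. Then for all coprime positive integers m₁ and m₂, a_{m₁m₂} = a_{m₁}·a_{m₂}. -/

import Mathlib

/-- The number of `E`-stable finite-index submodules of `L` of index `m`. -/
noncomputable def stableSubmoduleCount (L : Type) [AddCommGroup L] [Module ℤ L]
    (E : Set (Module.End ℤ L)) (m : ℕ) : ℕ :=
  Nat.card {H : Submodule ℤ L //
    Nat.card (L ⧸ H) = m ∧ ∀ φ ∈ E, ∀ x ∈ H, φ x ∈ H}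

/-!
If `H ≤ M` has index `m * n` with `m` and `n` coprime, then the finite abelian group `M ⧸ H` is the
direct sum of its `m`-torsion and its `n`-torsion, so `H` is the intersection of the submodules
`{x | n • x ∈ H}` and `{x | m • x ∈ H}`, of index `m` and `n` respectively. Conversely, submodules
of coprime indices `m` and `n` intersect in a submodule of index `m * n`. Both constructions
preserve stability under endomorphisms, and they are inverse to each other.
-/

section

variable {R M : Type*} [Ring R] [AddCommGroup M] [Module R M]

theorem coprime_natCard_of_forall_nsmul_eq_zero {A : Type*} [AddCommGroup A] [Finite A] {m n : ℕ}
    (hA : ∀ a : A, m • a = 0) (hco : m.Coprime n) : (Nat.card A).Coprime n :=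
  (hco.pow_left _).coprime_dvd_left (card_dvd_exponent_nsmul_rank' A hA)

theorem natCard_quotient_dvd_of_le {H K : Submodule R M} (h : H ≤ K) :
    Nat.card (M ⧸ K) ∣ Nat.card (M ⧸ H) :=
  AddSubgroup.index_dvd_of_le (Submodule.toAddSubgroup_mono h)

theorem natCard_quotient_inf_dvd (H K : Submodule R M) :
    Nat.card (M ⧸ H ⊓ K) ∣ Nat.card (M ⧸ H) * Nat.card (M ⧸ K) := by
  change (H.toAddSubgroup ⊓ K.toAddSubgroup).index ∣
    H.toAddSubgroup.index * K.toAddSubgroup.index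
  rw [← AddSubgroup.relIndex_mul_index (inf_le_right : _ ≤ K.toAddSubgroup),
    AddSubgroup.inf_relIndex_right]
  exact mul_dvd_mul_right (AddSubgroup.relIndex_dvd_index_of_normal _ _) _

theorem natCard_quotient_inf_of_coprime {H K : Submodule R M}
    (hco : (Nat.card (M ⧸ H)).Coprime (Nat.card (M ⧸ K))) :
    Nat.card (M ⧸ H ⊓ K) = Nat.card (M ⧸ H) * Nat.card (M ⧸ K) :=
  dvd_antisymm (natCard_quotient_inf_dvd H K) <|
    hco.mul_dvd_of_dvd_of_dvd (natCard_quotient_dvd_of_le inf_le_left)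
      (natCard_quotient_dvd_of_le inf_le_right)

theorem natCard_quotient_nsmul_mem (H : Submodule R M) (x : M) : Nat.card (M ⧸ H) • x ∈ H :=
  H.toAddSubgroup.nsmul_index_mem x

theorem mem_of_coprime_nsmul_mem {H : Submodule R M} {m n : ℕ} (hco : m.Coprime n) {x : M}
    (hm : m • x ∈ H) (hn : n • x ∈ H) : x ∈ H := by
  simp only [← Submodule.Quotient.mk_eq_zero, Submodule.Quotient.mk_smul] at hm hn ⊢
  simpa only [hco.gcd_eq_one, one_nsmul] using gcd_nsmul_eq_zero.mpr ⟨hm, hn⟩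

/-- The submodule `{x | n • x ∈ H}`, the preimage in `M` of the `n`-torsion of `M ⧸ H`. -/
def nsmulComap (n : ℕ) (H : Submodule R M) : Submodule R M :=
  H.comap (n • LinearMap.id)

theorem mem_nsmulComap {n : ℕ} {H : Submodule R M} {x : M} : x ∈ nsmulComap n H ↔ n • x ∈ H :=
  Iff.rfl

theorem le_nsmulComap (n : ℕ) (H : Submodule R M) : H ≤ nsmulComap n H :=
  fun _ hx => nsmul_mem hx n

theorem nsmulComap_inf_nsmulComap_of_coprime {m n : ℕ} (hco : m.Coprime n) (H : Submodule R M) :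
    nsmulComap m H ⊓ nsmulComap n H = H :=
  le_antisymm (fun _ hx => mem_of_coprime_nsmul_mem hco hx.1 hx.2)
    (le_inf (le_nsmulComap m H) (le_nsmulComap n H))

theorem nsmulComap_natCard_quotient_inf {H K : Submodule R M}
    (hco : (Nat.card (M ⧸ H)).Coprime (Nat.card (M ⧸ K))) :
    nsmulComap (Nat.card (M ⧸ K)) (H ⊓ K) = H :=
  le_antisymm
    (fun x hx => mem_of_coprime_nsmul_mem hco (natCard_quotient_nsmul_mem H x) hx.1)
    fun x hx => ⟨nsmul_mem hx _, natCard_quotient_nsmul_mem K x⟩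

theorem nsmulComap_mem_invtSubmodule {φ : Module.End R M} {H : Submodule R M}
    (hH : H ∈ φ.invtSubmodule) (n : ℕ) : nsmulComap n H ∈ φ.invtSubmodule := fun x hx =>
  mem_nsmulComap.mpr (map_nsmul φ n x ▸ hH (mem_nsmulComap.mp hx))

theorem natCard_quotient_nsmulComap_dvd {m n : ℕ} (hm : 0 < m) (hn : 0 < n) (hco : m.Coprime n)
    {H : Submodule R M} (hH : Nat.card (M ⧸ H) = m * n) :
    Nat.card (M ⧸ nsmulComap n H) ∣ m := by
  have hdvd : Nat.card (M ⧸ nsmulComap n H) ∣ m * n :=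
    hH ▸ natCard_quotient_dvd_of_le (le_nsmulComap n H)
  have : Finite (M ⧸ nsmulComap n H) :=
    Nat.finite_of_card_ne_zero (ne_zero_of_dvd_ne_zero (Nat.mul_pos hm hn).ne' hdvd)
  have hkill (a : M ⧸ nsmulComap n H) : m • a = 0 := by
    obtain ⟨x, rfl⟩ := Submodule.Quotient.mk_surjective _ a
    rw [← Submodule.Quotient.mk_smul, Submodule.Quotient.mk_eq_zero, mem_nsmulComap, smul_smul,
      mul_comm, ← hH]
    exact natCard_quotient_nsmul_mem H x
  exact (coprime_natCard_of_forall_nsmul_eq_zero hkill hco).dvd_of_dvd_mul_right hdvd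

theorem natCard_quotient_nsmulComap {m n : ℕ} (hm : 0 < m) (hn : 0 < n) (hco : m.Coprime n)
    {H : Submodule R M} (hH : Nat.card (M ⧸ H) = m * n) :
    Nat.card (M ⧸ nsmulComap n H) = m := by
  have hdvd_m := natCard_quotient_nsmulComap_dvd hm hn hco hH
  have hdvd_n := natCard_quotient_nsmulComap_dvd hn hm hco.symm (hH.trans (mul_comm m n))
  have hmul : m * n ∣ Nat.card (M ⧸ nsmulComap n H) * Nat.card (M ⧸ nsmulComap m H) := by
    simpa only [nsmulComap_inf_nsmulComap_of_coprime hco.symm, hH] using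
      natCard_quotient_inf_dvd (nsmulComap n H) (nsmulComap m H)
  exact dvd_antisymm hdvd_m <| Nat.dvd_of_mul_dvd_mul_right hn <|
    hmul.trans (mul_dvd_mul_left _ hdvd_n)

/-- The submodules of index `m` that are stable under every endomorphism in `E`. As `Nat.card` of an
infinite type is `0`, index `0` stands for infinite index. -/
def stableSubmodulesOfIndex (E : Set (Module.End R M)) (m : ℕ) : Set (Submodule R M) :=
  {H | Nat.card (M ⧸ H) = m ∧ ∀ φ ∈ E, H ∈ φ.invtSubmodule}

variable {E : Set (Module.End R M)} {m n : ℕ} {H K : Submodule R M}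

theorem inf_mem_stableSubmodulesOfIndex (hco : m.Coprime n) (hH : H ∈ stableSubmodulesOfIndex E m)
    (hK : K ∈ stableSubmodulesOfIndex E n) : H ⊓ K ∈ stableSubmodulesOfIndex E (m * n) := by
  obtain ⟨rfl, hHE⟩ := hH
  obtain ⟨rfl, hKE⟩ := hK
  exact ⟨natCard_quotient_inf_of_coprime hco,
    fun φ hφ => Module.End.invtSubmodule.inf_mem (hHE φ hφ) (hKE φ hφ)⟩

theorem nsmulComap_mem_stableSubmodulesOfIndex (hm : 0 < m) (hn : 0 < n) (hco : m.Coprime n)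
    (hH : H ∈ stableSubmodulesOfIndex E (m * n)) :
    nsmulComap n H ∈ stableSubmodulesOfIndex E m :=
  ⟨natCard_quotient_nsmulComap hm hn hco hH.1,
    fun φ hφ => nsmulComap_mem_invtSubmodule (hH.2 φ hφ) n⟩

theorem nsmulComap_inf_of_mem_stableSubmodulesOfIndex (hco : m.Coprime n)
    (hH : H ∈ stableSubmodulesOfIndex E m) (hK : K ∈ stableSubmodulesOfIndex E n) :
    nsmulComap n (H ⊓ K) = H := by
  obtain ⟨rfl, -⟩ := hH
  obtain ⟨rfl, -⟩ := hK
  exact nsmulComap_natCard_quotient_inf hco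

/-- The bijection `H ↦ ({x | n • x ∈ H}, {x | m • x ∈ H})`, with inverse `(H, K) ↦ H ⊓ K`, behind
the multiplicativity of the number of stable submodules. -/
def stableSubmodulesOfIndexMulEquiv (E : Set (Module.End R M)) (hm : 0 < m) (hn : 0 < n)
    (hco : m.Coprime n) :
    stableSubmodulesOfIndex E (m * n) ≃
      stableSubmodulesOfIndex E m × stableSubmodulesOfIndex E n where
  toFun H :=
    (⟨nsmulComap n H, nsmulComap_mem_stableSubmodulesOfIndex hm hn hco H.2⟩,
      ⟨nsmulComap m H,
        nsmulComap_mem_stableSubmodulesOfIndex hn hm hco.symm (mul_comm m n ▸ H.2)⟩)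
  invFun P := ⟨P.1 ⊓ P.2, inf_mem_stableSubmodulesOfIndex hco P.1.2 P.2.2⟩
  left_inv H := Subtype.ext (nsmulComap_inf_nsmulComap_of_coprime hco.symm H.1)
  right_inv := fun ⟨⟨H, hH⟩, ⟨K, hK⟩⟩ => Prod.ext
    (Subtype.ext (nsmulComap_inf_of_mem_stableSubmodulesOfIndex hco hH hK))
    (Subtype.ext <| (congrArg (nsmulComap m) (inf_comm H K)).trans
      (nsmulComap_inf_of_mem_stableSubmodulesOfIndex hco.symm hK hH))

-- `Set.encard`, unlike `Nat.card`, has no junk value when there are infinitely many submodules.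
theorem stableSubmoduleCount_multiplicative_general (E : Set (Module.End R M)) (hm : 0 < m)
    (hn : 0 < n) (hco : m.Coprime n) :
    (stableSubmodulesOfIndex E (m * n)).encard =
      (stableSubmodulesOfIndex E m).encard * (stableSubmodulesOfIndex E n).encard :=
  (ENat.card_congr (stableSubmodulesOfIndexMulEquiv E hm hn hco)).trans (ENat.card_prod _ _)

end

theorem stableSubmoduleCount_eq_toNat_encard (L : Type) [AddCommGroup L] [Module ℤ L]
    (E : Set (Module.End ℤ L)) (m : ℕ) :
    stableSubmoduleCount L E m = (stableSubmodulesOfIndex E m).encard.toNat :=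
  Nat.card_coe_set_eq (stableSubmodulesOfIndex E m)

/-- Let `L` be a free `ℤ`-module of finite rank and `E` any set of
`ℤ`-linear endomorphisms of `L`.  For `m ≥ 1` let `a m` be the number of
submodules `H ≤ L` with `|L/H| = m` and `φ(H) ⊆ H` for all `φ ∈ E`.  Then
for coprime positive integers `m₁, m₂`, `a (m₁ m₂) = a m₁ · a m₂`. -/
theorem stableSubmoduleCount_multiplicative (L : Type) [AddCommGroup L] [Module ℤ L]
    [Module.Free ℤ L] [Module.Finite ℤ L] (E : Set (Module.End ℤ L))
    (m₁ m₂ : ℕ) (h₁ : 0 < m₁) (h₂ : 0 < m₂) (hco : Nat.Coprime m₁ m₂) :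
    stableSubmoduleCount L E (m₁ * m₂)
      = stableSubmoduleCount L E m₁ * stableSubmoduleCount L E m₂ := by
  simp only [stableSubmoduleCount_eq_toNat_encard,
    stableSubmoduleCount_multiplicative_general E h₁ h₂ hco, ENat.toNat_mul]
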